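/- arXiv:1311.0671 — 2 statements merged into one kernel-verified Lean document; each statement's English description precedes it below -/
import Mathlib

section
/- Let M = G/H be a compact homogeneous LCK manifold and let ξ ∈ 𝔷 be a nonzero central element with θ(ξ) ≡ 0. Write θ = a·(Jξ)^♭ + θ₀ with a ∈ ℝ and θ₀ orthogonal to span{ξ, Jξ}. Then for every X ∈ 𝔤, the function f_X := g(X, Jξ) satisfies df_X = 2 θ₀(X) (Jξ)^♭ − 2 f_X θ₀. -/
/-!
We work in an abstract, algebraic model of the differential geometry of a
(connected) smooth manifold `M`, since Mathlib does not yet provide Riemannian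
metrics, Levi-Civita connections or Kähler/LCK geometry.

In the structure `RiemannianVF` below, `Pt` is the set of points of `M`,
`Fn` the commutative `ℝ`-algebra of smooth real-valued functions on `M`
(together with pointwise evaluation `eval`), `Vec` the `Fn`-module of smooth
vector fields, `D X f` the derivative of the function `f` in the direction of
the vector field `X`, `lie` the Lie bracket of vector fields, `g` a Riemannian
metric and `nabla` its Levi-Civita connection (characterized by being
torsion-free and metric).  Genuine Riemannian manifolds provide models of this
structure.
-/

/-- Abstract model of the smooth functions / vector fields / Lie bracket /
Riemannian metric / Levi-Civita connection of a connected Riemannian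
manifold. -/
structure RiemannianVF where
  /-- the points of the manifold `M` -/
  Pt : Type
  /-- the smooth real valued functions on `M` -/
  Fn : Type
  [instCommRing : CommRing Fn]
  [instAlgebra : Algebra ℝ Fn]
  /-- evaluation of a smooth function at a point of `M` -/
  eval : Fn →ₐ[ℝ] (Pt → ℝ)
  eval_injective : Function.Injective eval
  /-- the smooth vector fields on `M` -/
  Vec : Type
  [instAddCommGroup : AddCommGroup Vec]
  [instModuleFn : Module Fn Vec]
  [instModuleR : Module ℝ Vec]
  [instTower : IsScalarTower ℝ Fn Vec]
  /-- derivative of a smooth function along a vector field -/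
  D : Vec → Fn → Fn
  D_add_left : ∀ X Y f, D (X + Y) f = D X f + D Y f
  D_smul_left : ∀ (f : Fn) (X : Vec) (h : Fn), D (f • X) h = f * D X h
  D_add : ∀ X f h, D X (f + h) = D X f + D X h
  D_mul : ∀ X f h, D X (f * h) = f * D X h + h * D X f
  D_algebraMap : ∀ X (c : ℝ), D X (algebraMap ℝ Fn c) = 0
  /-- the Lie bracket of vector fields -/
  lie : Vec → Vec → Vec
  lie_skew : ∀ X Y, lie X Y = - lie Y X
  lie_add_left : ∀ X Y Z, lie (X + Y) Z = lie X Z + lie Y Z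
  lie_smul : ∀ X (f : Fn) Y, lie X (f • Y) = (D X f) • Y + f • lie X Y
  lie_jacobi : ∀ X Y Z, lie X (lie Y Z) = lie (lie X Y) Z + lie Y (lie X Z)
  D_lie : ∀ X Y f, D (lie X Y) f = D X (D Y f) - D Y (D X f)
  /-- the Riemannian metric -/
  g : Vec → Vec → Fn
  g_symm : ∀ X Y, g X Y = g Y X
  g_add_left : ∀ X Y Z, g (X + Y) Z = g X Z + g Y Z
  g_smul_left : ∀ (f : Fn) X Y, g (f • X) Y = f * g X Y
  g_nondeg : ∀ X, (∀ Y, g X Y = 0) → X = 0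
  /-- the Levi-Civita connection of `g` -/
  nabla : Vec → Vec → Vec
  nabla_add_left : ∀ X Y Z, nabla (X + Y) Z = nabla X Z + nabla Y Z
  nabla_smul_left : ∀ (f : Fn) X Y, nabla (f • X) Y = f • nabla X Y
  nabla_add : ∀ X Y Z, nabla X (Y + Z) = nabla X Y + nabla X Z
  nabla_smul : ∀ X (f : Fn) Y, nabla X (f • Y) = (D X f) • Y + f • nabla X Y
  torsion_free : ∀ X Y, nabla X Y - nabla Y X = lie X Y
  metric_compat : ∀ X Y Z, D X (g Y Z) = g (nabla X Y) Z + g Y (nabla X Z)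
  /-- `M` is connected: a function with vanishing differential is constant -/
  connected : ∀ f, (∀ X, D X f = 0) → ∃ c : ℝ, f = algebraMap ℝ Fn c

attribute [instance] RiemannianVF.instCommRing RiemannianVF.instAlgebra
  RiemannianVF.instAddCommGroup RiemannianVF.instModuleFn
  RiemannianVF.instModuleR RiemannianVF.instTower

/-- An almost Hermitian manifold: a Riemannian manifold together with a
skew-symmetric endomorphism `J` of the tangent bundle with `J ∘ J = -id`. -/
structure AlmostHermitianVF extends RiemannianVF where
  /-- the almost complex structure -/
  J : Vec → Vec
  J_add : ∀ X Y, J (X + Y) = J X + J Y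
  J_smul : ∀ (f : Fn) X, J (f • X) = f • J X
  J_sq : ∀ X, J (J X) = - X
  J_skew : ∀ X Y, g (J X) Y = - g X (J Y)

namespace AlmostHermitianVF

variable (S : AlmostHermitianVF)

/-- the Lie derivative `(L_X J)(Y) = [X, JY] - J [X, Y]` of `J` along `X` -/
def lieJ (X Y : S.Vec) : S.Vec := S.lie X (S.J Y) - S.J (S.lie X Y)

/-- the Nijenhuis tensor `N^J(X,Y) = [X,Y] + J[X,JY] + J[JX,Y] - [JX,JY]` -/
def nijenhuis (X Y : S.Vec) : S.Vec :=
  S.lie X Y + S.J (S.lie X (S.J Y)) + S.J (S.lie (S.J X) Y) - S.lie (S.J X) (S.J Y)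

/-- the fundamental 2-form `ω = g(J·,·)` -/
def omega (X Y : S.Vec) : S.Fn := S.g (S.J X) Y

/-- the exterior differential of the fundamental 2-form `ω`, via the usual
Koszul-type formula -/
def dOmega (X Y Z : S.Vec) : S.Fn :=
  S.D X (S.omega Y Z) - S.D Y (S.omega X Z) + S.D Z (S.omega X Y)
    - S.omega (S.lie X Y) Z + S.omega (S.lie X Z) Y - S.omega (S.lie Y Z) X

/-- a vector field `X` is holomorphic if `L_X J = 0` -/
def Holomorphic (X : S.Vec) : Prop := ∀ Y, S.lieJ X Y = 0

end AlmostHermitianVF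

/-- A Hermitian manifold: an almost Hermitian manifold whose almost complex
structure is integrable (vanishing Nijenhuis tensor). -/
structure HermitianVF extends AlmostHermitianVF where
  integrable : ∀ X Y, toAlmostHermitianVF.nijenhuis X Y = 0

/-- A Kähler manifold: a Hermitian manifold whose complex structure is
parallel with respect to the Levi-Civita connection. -/
structure KaehlerVF extends HermitianVF where
  kaehler : ∀ X Y, nabla X (J Y) = J (nabla X Y)

/-- A locally conformally Kähler (LCK) manifold: a Hermitian manifold whose
fundamental 2-form `ω` satisfies `dω = -2 θ ∧ ω` for a closed 1-form `θ`
(the Lee form). -/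
structure LCKVF extends HermitianVF where
  /-- the Lee form -/
  θ : Vec → Fn
  θ_add : ∀ X Y, θ (X + Y) = θ X + θ Y
  θ_smul : ∀ (f : Fn) X, θ (f • X) = f * θ X
  /-- the Lee form is closed -/
  θ_closed : ∀ X Y, D X (θ Y) - D Y (θ X) - θ (lie X Y) = 0
  /-- the LCK condition `dω = -2 θ ∧ ω` -/
  lck : ∀ X Y Z, toAlmostHermitianVF.dOmega X Y Z =
    -(2 : Fn) * (θ X * toAlmostHermitianVF.omega Y Z
      - θ Y * toAlmostHermitianVF.omega X Z
      + θ Z * toAlmostHermitianVF.omega X Y)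

/-- A compact homogeneous locally conformally Kähler manifold `M = G/H`:
a compact connected LCK manifold with nonvanishing Lee form `θ` normalized to
unit length, acted on transitively and effectively by a compact connected Lie
group `G` of holomorphic isometries.  The action is recorded infinitesimally:
`gAlg` is the Lie algebra `𝔤` of `G`, realized as the (finite-dimensional) Lie
algebra of fundamental vector fields on `M` (recall `[X^a, X^b] = -X^{[a,b]}`,
so `gAlg` is a Lie subalgebra of the vector fields, anti-isomorphic to `𝔤`);
the fundamental fields are Killing (`G` acts by isometries) and holomorphic
(`G` preserves `J`), they span every tangent space (`G` acts transitively,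
recorded both pointwise and through the constancy of invariant functions),
and `𝔤` is the Lie algebra of a *compact* group, i.e. it is reductive:
`𝔤 = 𝔷(𝔤) ⊕ [𝔤,𝔤]` (recorded as: `𝔤` is spanned by central elements and
brackets).  Compactness of `M` is recorded via a topology on the points
together with the first-derivative test for extrema of smooth functions. -/
structure CompactHomogeneousLCKVF extends LCKVF where
  [instTop : TopologicalSpace Pt]
  [instCompact : CompactSpace Pt]
  [instNonempty : Nonempty Pt]
  eval_continuous : ∀ f, Continuous (eval f)
  /-- the first-derivative test: at a global extremum the differential of a
  smooth function vanishes (every global extremum exists by compactness) -/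
  eval_crit : ∀ (f : Fn) (x : Pt),
    (IsMaxOn (eval f) Set.univ x ∨ IsMinOn (eval f) Set.univ x) →
    ∀ X, eval (D X f) x = 0
  /-- the vector field `θ^♯` metrically dual to the Lee form -/
  θsharp : Vec
  θsharp_spec : ∀ Y, g θsharp Y = θ Y
  /-- the Lee form has unit length (in particular `θ ≠ 0`) -/
  θ_unit : g θsharp θsharp = 1
  /-- the Lie algebra `𝔤` of fundamental vector fields of the `G`-action -/
  gAlg : Submodule ℝ Vec
  gAlg_fd : FiniteDimensional ℝ gAlg
  gAlg_lie : ∀ X ∈ gAlg, ∀ Y ∈ gAlg, lie X Y ∈ gAlg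
  /-- `G` acts by isometries: fundamental fields are Killing -/
  gAlg_killing : ∀ X ∈ gAlg, ∀ Y Z, D X (g Y Z) = g (lie X Y) Z + g Y (lie X Z)
  /-- `G` preserves `J`: fundamental fields are holomorphic -/
  gAlg_holo : ∀ X ∈ gAlg, ∀ Y, lie X (J Y) = J (lie X Y)
  /-- `G` preserves the Lee form -/
  gAlg_theta : ∀ X ∈ gAlg, ∀ Y, D X (θ Y) = θ (lie X Y)
  /-- transitivity, pointwise: every tangent vector at every point is the
  value of a fundamental vector field -/
  gAlg_span : ∀ (V : Vec) (x : Pt), ∃ X ∈ gAlg, ∀ f, eval (D X f) x = eval (D V f) x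
  /-- transitivity: `G`-invariant functions are constant -/
  gAlg_transitive : ∀ f, (∀ X ∈ gAlg, D X f = 0) → ∃ c : ℝ, f = algebraMap ℝ Fn c
  /-- `𝔤` is the Lie algebra of a compact Lie group, hence reductive:
  it is spanned by its center together with its derived algebra -/
  gAlg_reductive : ∀ X ∈ gAlg, X ∈ Submodule.span ℝ
    ({Z | Z ∈ gAlg ∧ ∀ W ∈ gAlg, lie Z W = 0} ∪
     {Z | ∃ U ∈ gAlg, ∃ V ∈ gAlg, Z = lie U V})

attribute [instance] CompactHomogeneousLCKVF.instTop
  CompactHomogeneousLCKVF.instCompact CompactHomogeneousLCKVF.instNonempty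
  CompactHomogeneousLCKVF.gAlg_fd

namespace CompactHomogeneousLCKVF

variable (S : CompactHomogeneousLCKVF)

/-- the set of fundamental vector fields coming from the center `𝔷` of `𝔤` -/
def centerSet : Set S.Vec :=
  {X | X ∈ S.gAlg ∧ ∀ Y ∈ S.gAlg, S.lie X Y = 0}

/-- the dimension of the center `𝔷` of `𝔤` (the centralizer set is an
`ℝ`-subspace of `𝔤`, so it coincides with its span) -/
noncomputable def centerDim : ℕ :=
  Module.finrank ℝ (Submodule.span ℝ (centerSet S))

/-- a compact homogeneous LCK manifold is Vaisman if its Lee form is parallel: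
`∇θ = 0`, equivalently `∇θ^♯ = 0`. -/
def Vaisman : Prop := ∀ X, S.nabla X S.θsharp = 0

end CompactHomogeneousLCKVF

/-- equation (2) in the proof of Lemma 3.2.  Let `M = G/H`
be a compact homogeneous LCK manifold and `ξ ∈ 𝔷` a nonzero central element
with `θ(ξ) ≡ 0`.  Write `θ = a (Jξ)^♭ + θ₀` with `a ∈ ℝ` and `θ₀` orthogonal
to `span{ξ, Jξ}` (i.e. `θ₀(ξ) = 0` and `θ₀(Jξ) = 0`).  Then for every
`X ∈ 𝔤` the function `f_X := g(X, Jξ)` satisfies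
`d f_X = 2 θ₀(X) (Jξ)^♭ - 2 f_X θ₀`,
i.e. `D_Y f_X = 2 θ₀(X) g(Jξ, Y) - 2 f_X θ₀(Y)` for all vector fields `Y`. -/
theorem dfX_eq (S : CompactHomogeneousLCKVF)
    (ξ : S.Vec) (hξc : ξ ∈ S.centerSet) (hξ0 : ξ ≠ 0)
    (hθξ : S.θ ξ = 0)
    (a : ℝ) (θ₀ : S.Vec → S.Fn)
    (hdec : ∀ Y, S.θ Y = algebraMap ℝ S.Fn a * S.g (S.J ξ) Y + θ₀ Y)
    (hθ₀ξ : θ₀ ξ = 0) (hθ₀Jξ : θ₀ (S.J ξ) = 0)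
    (X : S.Vec) (hX : X ∈ S.gAlg) :
    ∀ Y : S.Vec,
      S.D Y (S.g X (S.J ξ)) =
        2 * θ₀ X * S.g (S.J ξ) Y - 2 * S.g X (S.J ξ) * θ₀ Y := by
  intro Y
  have J_zero : S.J 0 = 0 := by simpa using S.J_smul 0 0
  have g_zero (Z : S.Vec) : S.g 0 Z = 0 := by simpa using S.g_smul_left 0 0 Z
  have lie_ξX : S.lie ξ X = 0 := hξc.2 X hX
  have lie_Xξ : S.lie X ξ = 0 := by rw [S.lie_skew, lie_ξX, neg_zero]
  -- `ξ` preserves `ω` and `X` preserves the metric dual of `Jξ`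
  have hξ := S.gAlg_killing ξ hξc.1 (S.J X) Y
  rw [S.gAlg_holo ξ hξc.1, lie_ξX, J_zero, g_zero] at hξ
  have hXJξ := S.gAlg_killing X hX (S.J ξ) Y
  rw [S.gAlg_holo X hX, lie_Xξ, J_zero, g_zero] at hXJξ
  have hlck := S.lck ξ X Y
  simp only [AlmostHermitianVF.dOmega, AlmostHermitianVF.omega] at hlck
  rw [hξ, hXJξ, lie_ξX, J_zero, g_zero, S.J_skew (S.lie ξ Y) X, S.J_skew (S.lie X Y) ξ,
    S.g_symm (S.lie ξ Y), S.g_symm (S.lie X Y), hθξ, hdec X, hdec Y, S.g_symm (S.J ξ) X] at hlck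
  linear_combination hlck
end

section
/- Let M = G/H be a compact homogeneous LCK manifold with dim 𝔷 = 2, choose an orthonormal basis {ξ, η} of 𝔷 with ξ = Jθ^♯ and η ⊥ ξ. Then b := θ(η) is a nonzero constant. -/
namespace AlmostHermitianVF

variable (S : AlmostHermitianVF)

lemma J_zero : S.J 0 = 0 := by
  simpa using S.J_smul 0 0

lemma eq_zero_of_J_eq_zero {X : S.Vec} (h : S.J X = 0) : X = 0 := by
  have h' := S.J_sq X
  rw [h, S.J_zero] at h'
  exact neg_eq_zero.mp h'.symm

lemma omega_zero_left (X : S.Vec) : S.omega 0 X = 0 := by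
  have h := S.g_smul_left 0 (S.J 0) X
  rw [zero_smul, zero_mul] at h
  rw [omega, S.J_zero, h]

lemma g_J_J (X Y : S.Vec) : S.g (S.J X) (S.J Y) = S.g X Y := by
  have h := S.J_skew X (S.J Y)
  have h' := S.g_smul_left (-1) Y X
  rw [neg_one_smul, neg_one_mul] at h'
  rw [h, S.J_sq, S.g_symm, h', neg_neg, S.g_symm]

end AlmostHermitianVF

namespace CompactHomogeneousLCKVF

variable (S : CompactHomogeneousLCKVF)

lemma exists_const_theta_of_mem_centerSet {η : S.Vec} (hη : η ∈ S.centerSet) :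
    ∃ b : ℝ, S.θ η = algebraMap ℝ S.Fn b := by
  refine S.gAlg_transitive _ fun X hX => ?_
  have h0 : S.θ 0 = 0 := by simpa using S.θ_smul 0 0
  rw [S.gAlg_theta X hX, S.lie_skew, hη.2 X hX, neg_zero, h0]

/-- If the anti-Lee field `Jθ^♯` is central, then `θ^♯` commutes with every central field. -/
lemma lie_thetaSharp_of_mem_centerSet (hξ : S.J S.θsharp ∈ S.centerSet)
    {η : S.Vec} (hη : η ∈ S.centerSet) : S.lie S.θsharp η = 0 := by
  have h : S.lie η S.θsharp = 0 := by
    apply S.eq_zero_of_J_eq_zero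
    rw [← S.gAlg_holo η hη.1, hη.2 _ hξ.1]
  rw [S.lie_skew, h, neg_zero]

/-- If the anti-Lee field `Jθ^♯` is central, then `θ^♯` commutes with `Jη` for every central
field `η`, by the integrability of `J`. -/
lemma lie_thetaSharp_J_of_mem_centerSet (hξ : S.J S.θsharp ∈ S.centerSet)
    {η : S.Vec} (hη : η ∈ S.centerSet) : S.lie S.θsharp (S.J η) = 0 := by
  apply S.eq_zero_of_J_eq_zero
  have h := S.integrable S.θsharp η
  rw [AlmostHermitianVF.nijenhuis, S.lie_thetaSharp_of_mem_centerSet hξ hη,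
    S.gAlg_holo _ hξ.1, hξ.2 _ hη.1, S.J_zero] at h
  simpa using h

lemma lie_J_self_of_mem_centerSet {η : S.Vec} (hη : η ∈ S.centerSet) :
    S.lie η (S.J η) = 0 := by
  rw [S.gAlg_holo η hη.1, hη.2 η hη.1, S.J_zero]

/-- The LCK identity evaluated on `(θ^♯, η, Jη)`, for a central unit field `η` orthogonal to
the central field `Jθ^♯`. -/
lemma theta_mul_self_eq_one (hξ : S.J S.θsharp ∈ S.centerSet)
    {η : S.Vec} (hη : η ∈ S.centerSet)
    (hη_unit : S.g η η = 1) (hη_orth : S.g (S.J S.θsharp) η = 0) :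
    S.θ η * S.θ η = 1 := by
  obtain ⟨b, hb⟩ := S.exists_const_theta_of_mem_centerSet hη
  have hD0 (X : S.Vec) : S.D X 0 = 0 := by simpa using S.D_algebraMap X 0
  have hD1 (X : S.Vec) : S.D X 1 = 0 := by simpa using S.D_algebraMap X 1
  have hηη : S.omega η (S.J η) = 1 := (S.g_J_J η η).trans hη_unit
  have hTη : S.omega S.θsharp (S.J η) = S.θ η :=
    (S.g_J_J S.θsharp η).trans (S.θsharp_spec η)
  have hTη' : S.omega S.θsharp η = 0 := hη_orth
  have hT : S.θ S.θsharp = 1 := by rw [← S.θsharp_spec, S.θ_unit]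
  have hDη : S.D η (S.θ η) = 0 := by rw [hb, S.D_algebraMap]
  have h := S.lck S.θsharp η (S.J η)
  rw [AlmostHermitianVF.dOmega, S.lie_thetaSharp_of_mem_centerSet hξ hη,
    S.lie_thetaSharp_J_of_mem_centerSet hξ hη, S.lie_J_self_of_mem_centerSet hη,
    hηη, hTη, hTη', hT, hD1, hD0, hDη] at h
  simp only [AlmostHermitianVF.omega_zero_left] at h
  have h2 : (2 : ℝ) • (S.θ η * S.θ η - 1) = 0 := by
    rw [two_smul]
    linear_combination -h
  exact sub_eq_zero.mp ((smul_eq_zero.mp h2).resolve_left two_ne_zero)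

end CompactHomogeneousLCKVF

/-- Remark after Lemma 3.2.  Let `M = G/H` be a compact
homogeneous LCK manifold with `dim 𝔷 = 2` and let `{ξ, η}` be an orthonormal
basis of `𝔷` with `ξ = Jθ^♯` and `η ⊥ ξ`.  Then `b := θ(η)` is a nonzero
constant.  (If `b = 0`, then by Lemma 3.1 `θ` would vanish on the whole
algebra of Killing fields, which is impossible.) -/
theorem theta_eta_nonzero_constant (S : CompactHomogeneousLCKVF)
    (h2 : S.centerDim = 2)
    (hξ : S.J S.θsharp ∈ S.centerSet)
    (η : S.Vec) (hη : η ∈ S.centerSet)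
    (hη_unit : S.g η η = 1) (hη_orth : S.g (S.J S.θsharp) η = 0) :
    ∃ b : ℝ, b ≠ 0 ∧ S.θ η = algebraMap ℝ S.Fn b := by
  obtain ⟨b, hb⟩ := S.exists_const_theta_of_mem_centerSet hη
  refine ⟨b, ?_, hb⟩
  rintro rfl
  have h := S.theta_mul_self_eq_one hξ hη hη_unit hη_orth
  rw [hb, map_zero, mul_zero] at h
  have hev := congrArg (fun f => S.eval f (Classical.arbitrary S.Pt)) h
  simp at hev
end
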